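/- Let Φ, Φ̃ : ℂⁿ → ℝ be strictly plurisubharmonic quadratic forms with Φ̃ ≤ Φ pointwise, and let κ♭ : ℂⁿ → ℂⁿ be an ℝ-linear isomorphism satisfying κ♭(Rad(Φ − Φ̃)) = Rad(Φ − Φ̃). Let ã ∈ ℂ and let Ψ̃ be a holomorphic quadratic form on ℂ^{2n} such that for some c > 0, 2 Re Ψ̃(z, w̄) − Φ(z) − Φ̃(w) ≤ −c|z − (κ♭)^{-1}(w)|² for all z, w ∈ ℂⁿ. Let v be an entire function with |v(w)| ≤ C₀⟨w⟩^{N} e^{Φ̃(w)} on ℂⁿ for some C₀ > 0, N ∈ ℝ, and set G̃ v(z) = ã ∫_{ℂⁿ} e^{2Ψ̃(z,w̄)} v(w) e^{-2Φ̃(w)} dL(w). Then WF^{1/2}_Φ(G̃v) ∩ Rad(Φ − Φ̃) ⊆ (κ♭)^{-1}(WF^{1/2}_Φ(v)) ∩ Rad(Φ − Φ̃). -/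

import Mathlib

open Matrix MeasureTheory ENNReal

noncomputable section

/-- The squared Euclidean norm `|z|²` on `ℂⁿ`. -/
def eSq {n : ℕ} (z : Fin n → ℂ) : ℝ := ∑ i, Complex.normSq (z i)

/-- The Japanese bracket `⟨z⟩ = (1 + |z|²)^{1/2}`. -/
def jb {n : ℕ} (z : Fin n → ℂ) : ℝ := Real.sqrt (1 + eSq z)

/-- `Φ : ℂⁿ → ℝ` is a (real) quadratic form of the underlying real coordinates. -/
def IsRQuad {n : ℕ} (Φ : (Fin n → ℂ) → ℝ) : Prop :=
  ∃ B : (Fin n → ℂ) →ₗ[ℝ] (Fin n → ℂ) →ₗ[ℝ] ℝ, ∀ z, Φ z = B z z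

/-- `Φ : ℂⁿ → ℝ` is a strictly plurisubharmonic quadratic form.  For a quadratic form `Φ`,
the Levi form satisfies `(∂²_{z z̄}Φ) w ⋅ w̄ = (Φ(w) + Φ(i w))/2`, so positive definiteness of
the Levi matrix is equivalent to `Φ(w) + Φ(i·w) > 0` for all `w ≠ 0`. -/
def IsSPSH {n : ℕ} (Φ : (Fin n → ℂ) → ℝ) : Prop :=
  IsRQuad Φ ∧ ∀ z : Fin n → ℂ, z ≠ 0 → 0 < Φ z + Φ (Complex.I • z)

/-- The squared weighted norm `‖u‖_s² = ∫ |u(z)|² ⟨z⟩^{2s} e^{-2Φ(z)} L(dz)` (in `ℝ≥0∞`). -/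
def hnorm {n : ℕ} (Φ : (Fin n → ℂ) → ℝ) (s : ℝ) (u : (Fin n → ℂ) → ℂ) : ℝ≥0∞ :=
  ∫⁻ z : Fin n → ℂ, (‖u z‖₊ : ℝ≥0∞) ^ 2 * ENNReal.ofReal (jb z ^ (2 * s) * Real.exp (-2 * Φ z))

/-- A conic subset of `ℂⁿ`. -/
def IsConic {n : ℕ} (V : Set (Fin n → ℂ)) : Prop := ∀ z ∈ V, ∀ t : ℝ, 0 < t → t • z ∈ V

/-- The `1/2`-Gelfand–Shilov wavefront set of `u` relative to `Φ`: the complement in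
`ℂⁿ∖{0}` of the points having an open conic neighborhood in `ℂⁿ∖{0}` on which
`|u(z)| ≤ C e^{Φ(z) - c|z|²}`. -/
def wf {n : ℕ} (Φ : (Fin n → ℂ) → ℝ) (u : (Fin n → ℂ) → ℂ) : Set (Fin n → ℂ) :=
  {z₀ | z₀ ≠ 0 ∧ ¬ ∃ V : Set (Fin n → ℂ), IsOpen V ∧ IsConic V ∧ (0 : Fin n → ℂ) ∉ V ∧ z₀ ∈ V ∧
      ∃ C c : ℝ, 0 < C ∧ 0 < c ∧ ∀ z ∈ V, ‖u z‖ ≤ C * Real.exp (Φ z - c * eSq z)}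

/-- A holomorphic quadratic form on `ℂ^{2n} = ℂⁿ_z × ℂⁿ_θ`. -/
def IsCQuad2 {n : ℕ} (Ψ : (Fin n → ℂ) → (Fin n → ℂ) → ℂ) : Prop :=
  ∃ B : ((Fin n → ℂ) × (Fin n → ℂ)) →ₗ[ℂ] ((Fin n → ℂ) × (Fin n → ℂ)) →ₗ[ℂ] ℂ,
    ∀ z θ, Ψ z θ = B (z, θ) (z, θ)

/-- A real quadratic form on `ℂⁿ × ℂⁿ` viewed as a real vector space. -/
def IsRQuadPair {n : ℕ} (R : (Fin n → ℂ) → (Fin n → ℂ) → ℝ) : Prop :=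
  ∃ B : ((Fin n → ℂ) × (Fin n → ℂ)) →ₗ[ℝ] ((Fin n → ℂ) × (Fin n → ℂ)) →ₗ[ℝ] ℝ,
    ∀ z w, R z w = B (z, w) (z, w)

/-- The Bergman-form integral operator
`G u (z) = a ∫ e^{2Ψ(z, w̄)} u(w) e^{-2Φ(w)} L(dw)`. -/
def berg {n : ℕ} (a : ℂ) (Ψ : (Fin n → ℂ) → (Fin n → ℂ) → ℂ) (Φ : (Fin n → ℂ) → ℝ)
    (u : (Fin n → ℂ) → ℂ) (z : Fin n → ℂ) : ℂ :=
  a * ∫ w : Fin n → ℂ, Complex.exp (2 * Ψ z (star w)) * u w * (Real.exp (-2 * Φ w) : ℂ)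


lemma x_eSq_nonneg {n : ℕ} (z : Fin n → ℂ) : 0 ≤ eSq z :=
  Finset.sum_nonneg fun i _ => Complex.normSq_nonneg _

lemma x_norm_le {n : ℕ} (z : Fin n → ℂ) : ‖z‖ ^ 2 ≤ eSq z := by
  have h : ‖z‖ ≤ Real.sqrt (eSq z) := by
    rw [pi_norm_le_iff_of_nonneg (Real.sqrt_nonneg _)]
    intro i
    apply Real.le_sqrt_of_sq_le
    rw [← Complex.normSq_eq_norm_sq]
    exact Finset.single_le_sum (f := fun i => Complex.normSq (z i))
      (fun i _ => Complex.normSq_nonneg _) (Finset.mem_univ i)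
  calc ‖z‖ ^ 2 ≤ Real.sqrt (eSq z) ^ 2 := by gcongr
    _ = eSq z := Real.sq_sqrt (x_eSq_nonneg z)

lemma x_le_norm {n : ℕ} (z : Fin n → ℂ) : eSq z ≤ ((n : ℝ) + 1) * ‖z‖ ^ 2 := by
  have h : eSq z ≤ ∑ _i : Fin n, ‖z‖ ^ 2 := by
    apply Finset.sum_le_sum
    intro i _
    rw [Complex.normSq_eq_norm_sq]
    have := norm_le_pi_norm z i
    gcongr
  simp at h
  nlinarith [sq_nonneg ‖z‖]

lemma x_eSq_pos {n : ℕ} {z : Fin n → ℂ} (hz : z ≠ 0) : 0 < eSq z :=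
  lt_of_lt_of_le (pow_pos (norm_pos_iff.2 hz) 2) (x_norm_le z)

lemma x_eSq_cont {n : ℕ} : Continuous (eSq : (Fin n → ℂ) → ℝ) := by
  unfold eSq
  exact continuous_finsetSum _ fun i _ => Complex.continuous_normSq.comp (continuous_apply i)

lemma x_eSq_smul {n : ℕ} (t : ℝ) (z : Fin n → ℂ) : eSq (t • z) = t ^ 2 * eSq z := by
  unfold eSq
  rw [Finset.mul_sum]
  refine Finset.sum_congr rfl fun i _ => ?_
  simp [Complex.normSq_mul, Complex.normSq_ofReal, sq]

lemma x_quad_cont {n : ℕ} {Φ : (Fin n → ℂ) → ℝ} (h : IsRQuad Φ) : Continuous Φ := by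
  obtain ⟨B, hB⟩ := h
  have : Φ = fun z => B.toContinuousBilinearMap z z := by
    ext z; simp [hB]
  rw [this]
  fun_prop

lemma x_quad_smul {n : ℕ} {Φ : (Fin n → ℂ) → ℝ} (h : IsRQuad Φ) (t : ℝ) (z : Fin n → ℂ) :
    Φ (t • z) = t ^ 2 * Φ z := by
  obtain ⟨B, hB⟩ := h
  simp [hB]
  ring

lemma x_gauss {n : ℕ} {b : ℝ} (hb : 0 < b) :
    Integrable (fun w : Fin n → ℂ => Real.exp (-b * eSq w)) := by
  have h1 : Integrable (fun w : ℂ => Real.exp (-b * Complex.normSq w)) := by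
    have := (GaussianFourier.integrable_cexp_neg_mul_sq_norm_add (V := ℂ) (b := (b : ℂ))
      (by simpa using hb) 0 0).norm
    refine this.congr (Filter.Eventually.of_forall fun w => ?_)
    simp only [Complex.norm_exp]
    congr 1
    rw [Complex.normSq_eq_norm_sq]
    simp [← Complex.ofReal_pow]
  have h2 := Integrable.fintype_prod (ι := Fin n) (E := ℂ) (𝕜 := ℝ)
    (f := fun _ (w : ℂ) => Real.exp (-b * Complex.normSq w)) (μ := fun _ => volume) (fun _ => h1)
  refine h2.congr (Filter.Eventually.of_forall fun w => ?_)
  simp only [eSq, Finset.mul_sum, Real.exp_sum]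

lemma x_jb {n : ℕ} (N ε : ℝ) (hε : 0 < ε) :
    ∃ A : ℝ, 0 < A ∧ ∀ w : Fin n → ℂ, jb w ^ N ≤ A * Real.exp (ε * eSq w) := by
  set η : ℝ := ε / (|N| + 1) with hη
  have hN : 0 < |N| + 1 := by positivity
  have hηp : 0 < η := by positivity
  refine ⟨Real.exp (|N| / 2 * (η - Real.log η - 1)), Real.exp_pos _, fun w => ?_⟩
  have hs := x_eSq_nonneg w
  have h1 : 0 < 1 + eSq w := by linarith
  have hj : 0 < jb w := Real.sqrt_pos.2 h1
  rw [Real.rpow_def_of_pos hj, ← Real.exp_add, Real.exp_le_exp]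
  have hl : Real.log (jb w) = Real.log (1 + eSq w) / 2 := Real.log_sqrt h1.le
  have hl0 : 0 ≤ Real.log (1 + eSq w) := Real.log_nonneg (by linarith)
  have h2 : Real.log (1 + eSq w) ≤ η * (1 + eSq w) - Real.log η - 1 := by
    have := Real.log_le_sub_one_of_pos (mul_pos hηp h1)
    rw [Real.log_mul hηp.ne' h1.ne'] at this
    linarith
  have h3 : |N| * η ≤ ε := by
    rw [hη, mul_div_assoc', div_le_iff₀ hN]
    nlinarith [abs_nonneg N]
  rw [hl]
  have h4 : Real.log (1 + eSq w) / 2 * N ≤ Real.log (1 + eSq w) / 2 * |N| := by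
    gcongr; exact le_abs_self N
  have h5 : Real.log (1 + eSq w) / 2 * |N| ≤ (η * (1 + eSq w) - Real.log η - 1) / 2 * |N| := by
    gcongr
  have h6 : |N| * η * eSq w ≤ ε * eSq w := by gcongr
  have h7 : 0 ≤ ε * eSq w := by positivity
  nlinarith

/-- the pure geometry -/
lemma x_geom {n : ℕ} (κ : (Fin n → ℂ) ≃ₗ[ℝ] (Fin n → ℂ)) (c c' δ : ℝ) (hc : 0 < c) (hc' : 0 < c')
    (hδ : 0 < δ) : ∃ m : ℝ, 0 < m ∧ ∀ z w : Fin n → ℂ,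
      (δ * ‖z‖ ≤ ‖z - κ.symm w‖ → m * (eSq z + eSq w) ≤ c * eSq (z - κ.symm w)) ∧
      m * (eSq z + eSq w) ≤ c * eSq (z - κ.symm w) + c' * eSq w := by
  obtain ⟨K, hK, hKb⟩ := (LinearMap.toContinuousLinearMap κ.toLinearMap).bound
  obtain ⟨K', hK', hKb'⟩ := (LinearMap.toContinuousLinearMap κ.symm.toLinearMap).bound
  set q : ℝ := K * (1 / δ + 1) with hq
  have hqp : 0 < q := by positivity
  have hD1 : 0 < (1 / δ) ^ 2 + q ^ 2 := by positivity
  have hD2 : 0 < 2 * K' ^ 2 + 1 := by positivity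
  set M : ℝ := min (c / ((1 / δ) ^ 2 + q ^ 2)) (min (c / 2) (c' / (2 * K' ^ 2 + 1))) with hM
  have hMp : 0 < M := by
    rw [hM]; refine lt_min (by positivity) (lt_min (by positivity) (by positivity))
  have M1 : M * ((1 / δ) ^ 2 + q ^ 2) ≤ c := by
    rw [← le_div_iff₀ hD1]; exact min_le_left _ _
  have M2 : M * 2 ≤ c := by
    rw [← le_div_iff₀ (by norm_num)]; exact (min_le_right _ _).trans (min_le_left _ _)
  have M3 : M * (2 * K' ^ 2 + 1) ≤ c' := by
    rw [← le_div_iff₀ hD2]; exact (min_le_right _ _).trans (min_le_right _ _)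
  have hn : (0 : ℝ) < (n : ℝ) + 1 := by positivity
  refine ⟨M / (n + 1), by positivity, fun z w => ?_⟩
  have hconv : M / (n + 1) * (eSq z + eSq w) ≤ M * (‖z‖ ^ 2 + ‖w‖ ^ 2) := by
    rw [div_mul_eq_mul_div, div_le_iff₀ hn]
    have := x_le_norm z
    have := x_le_norm w
    calc M * (eSq z + eSq w) ≤ M * (((n : ℝ) + 1) * ‖z‖ ^ 2 + ((n : ℝ) + 1) * ‖w‖ ^ 2) := by gcongr
      _ = _ := by ring
  have hd := x_norm_le (z - κ.symm w)
  have hw := x_norm_le w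
  have e1 : ‖κ.symm w‖ ≤ K' * ‖w‖ := hKb' w
  have e2 : ‖w‖ ≤ K * ‖κ.symm w‖ := by simpa using hKb (κ.symm w)
  have e3 : ‖κ.symm w‖ ≤ ‖z‖ + ‖z - κ.symm w‖ := by
    have := norm_sub_le z (z - κ.symm w)
    simpa using this
  have e4 : ‖z‖ ≤ ‖z - κ.symm w‖ + ‖κ.symm w‖ := by
    have := norm_add_le (z - κ.symm w) (κ.symm w)
    simpa using this
  set d := ‖z - κ.symm w‖
  have hd0 : 0 ≤ d := norm_nonneg _
  have hz0 : 0 ≤ ‖z‖ := norm_nonneg _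
  have hw0 : 0 ≤ ‖w‖ := norm_nonneg _
  refine ⟨fun h => hconv.trans ?_, hconv.trans ?_⟩
  · have f1 : ‖z‖ ≤ 1 / δ * d := by
      rw [div_mul_eq_mul_div, le_div_iff₀ hδ]; linarith
    have f2 : ‖w‖ ≤ q * d := by
      calc ‖w‖ ≤ K * ‖κ.symm w‖ := e2
        _ ≤ K * (1 / δ * d + d) := by gcongr; linarith
        _ = q * d := by rw [hq]; ring
    calc M * (‖z‖ ^ 2 + ‖w‖ ^ 2) ≤ M * ((1 / δ * d) ^ 2 + (q * d) ^ 2) := by gcongr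
      _ = (M * ((1 / δ) ^ 2 + q ^ 2)) * d ^ 2 := by ring
      _ ≤ c * d ^ 2 := by gcongr
      _ ≤ _ := by gcongr
  · have f1 : ‖z‖ ≤ d + K' * ‖w‖ := by linarith
    calc M * (‖z‖ ^ 2 + ‖w‖ ^ 2) ≤ M * ((d + K' * ‖w‖) ^ 2 + ‖w‖ ^ 2) := by gcongr
      _ ≤ M * (2 * d ^ 2 + 2 * (K' * ‖w‖) ^ 2 + ‖w‖ ^ 2) := by
        have := sq_nonneg (d - K' * ‖w‖)
        refine mul_le_mul_of_nonneg_left ?_ hMp.le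
        nlinarith
      _ = (M * 2) * d ^ 2 + (M * (2 * K' ^ 2 + 1)) * ‖w‖ ^ 2 := by ring
      _ ≤ c * d ^ 2 + c' * ‖w‖ ^ 2 := by gcongr
      _ ≤ _ := by gcongr

/-- cone separation -/
lemma x_cone {n : ℕ} (W : Set (Fin n → ℂ)) (hW : IsOpen W) (hWc : IsConic W)
    (z₀ : Fin n → ℂ) (hz₀ : z₀ ≠ 0) (hm : z₀ ∈ W) :
    ∃ (U : Set (Fin n → ℂ)) (δ : ℝ), IsOpen U ∧ IsConic U ∧ (0 : Fin n → ℂ) ∉ U ∧ z₀ ∈ U ∧ 0 < δ ∧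
      ∀ z ∈ U, ∀ y, y ∉ W → δ * ‖z‖ ≤ ‖z - y‖ := by
  obtain ⟨ε, hε, hb⟩ := Metric.isOpen_iff.1 hW z₀ hm
  have hz : 0 < ‖z₀‖ := norm_pos_iff.2 hz₀
  set r : ℝ := min (ε / 2) (‖z₀‖ / 2) with hr
  have hr0 : 0 < r := lt_min (by positivity) (by positivity)
  have hr1 : r ≤ ε / 2 := min_le_left _ _
  have hr2 : r ≤ ‖z₀‖ / 2 := min_le_right _ _
  refine ⟨⋃ t ∈ Set.Ioi (0 : ℝ), (fun z => t • z) ⁻¹' Metric.ball z₀ r, r / (‖z₀‖ + r), ?_, ?_, ?_, ?_,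
    by positivity, ?_⟩
  · exact isOpen_biUnion fun t _ => Metric.isOpen_ball.preimage (continuous_const_smul t)
  · intro z hz t ht
    simp only [Set.mem_iUnion, Set.mem_preimage, Set.mem_Ioi] at hz ⊢
    obtain ⟨s, hs, h⟩ := hz
    refine ⟨s / t, by positivity, ?_⟩
    rwa [smul_smul, div_mul_cancel₀ _ ht.ne']
  · simp only [Set.mem_iUnion, Set.mem_preimage, Set.mem_Ioi, smul_zero, Metric.mem_ball,
      dist_zero_left]
    rintro ⟨s, hs, h⟩
    linarith
  · simp only [Set.mem_iUnion, Set.mem_preimage, Set.mem_Ioi]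
    exact ⟨1, one_pos, by simpa using hr0⟩
  · intro z hz y hy
    simp only [Set.mem_iUnion, Set.mem_preimage, Set.mem_Ioi] at hz
    obtain ⟨t, ht, h⟩ := hz
    rw [Metric.mem_ball, dist_eq_norm] at h
    have hty : t • y ∉ W := fun hh => hy (by
      have := hWc _ hh t⁻¹ (by positivity)
      rwa [smul_smul, inv_mul_cancel₀ ht.ne', one_smul] at this)
    have h2 : ε ≤ ‖t • y - z₀‖ := by
      by_contra hlt
      exact hty (hb (by rw [Metric.mem_ball, dist_eq_norm]; exact not_le.1 hlt))
    have h3 : ‖t • y - z₀‖ ≤ ‖t • z - z₀‖ + ‖t • z - t • y‖ := by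
      have := norm_sub_le (t • z - z₀) (t • z - t • y)
      simpa using this
    have h4 : r ≤ t * ‖z - y‖ := by
      rw [← smul_sub, norm_smul, Real.norm_of_nonneg ht.le] at h3
      linarith
    have h5 : t * ‖z‖ ≤ ‖z₀‖ + r := by
      have := norm_add_le (t • z - z₀) z₀
      rw [sub_add_cancel, norm_smul, Real.norm_of_nonneg ht.le] at this
      linarith
    rw [div_mul_eq_mul_div, div_le_iff₀ (by positivity)]
    refine le_of_mul_le_mul_left ?_ ht
    calc t * (r * ‖z‖) = r * (t * ‖z‖) := by ring
      _ ≤ (t * ‖z - y‖) * (‖z₀‖ + r) := by gcongr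
      _ = _ := by ring

/-- With `Φ̃ ≤ Φ` strictly plurisubharmonic quadratic forms, `κ♭` an
`ℝ`-linear isomorphism preserving the radical `Rad(Φ − Φ̃)`, and `Ψ̃` a holomorphic
quadratic form with `2 Re Ψ̃(z,w̄) − Φ(z) − Φ̃(w) ≤ −c|z − (κ♭)⁻¹(w)|²`, the operator
`G̃ v (z) = ã ∫ e^{2Ψ̃(z,w̄)} v(w) e^{-2Φ̃(w)} dL(w)` satisfies
`WF^{1/2}_Φ(G̃v) ∩ Rad(Φ − Φ̃) ⊆ (κ♭)⁻¹(WF^{1/2}_Φ(v)) ∩ Rad(Φ − Φ̃)`. -/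
theorem stmt_12 (n : ℕ) (hn : 1 ≤ n) (Φ Φt : (Fin n → ℂ) → ℝ)
    (hΦ : IsSPSH Φ) (hΦt : IsSPSH Φt) (hle : ∀ z, Φt z ≤ Φ z)
    (κ : (Fin n → ℂ) ≃ₗ[ℝ] (Fin n → ℂ))
    (hrad : (fun w => κ w) '' {z : Fin n → ℂ | Φ z - Φt z = 0}
        = {z : Fin n → ℂ | Φ z - Φt z = 0})
    (at_ : ℂ) (Ψt : (Fin n → ℂ) → (Fin n → ℂ) → ℂ) (hΨt : IsCQuad2 Ψt)
    (c : ℝ) (hc : 0 < c)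
    (hest : ∀ z w : Fin n → ℂ,
        2 * (Ψt z (star w)).re - Φ z - Φt w ≤ -c * eSq (z - κ.symm w))
    (v : (Fin n → ℂ) → ℂ) (hv : Differentiable ℂ v)
    (C₀ N : ℝ) (hC₀ : 0 < C₀)
    (hg : ∀ w : Fin n → ℂ, ‖v w‖ ≤ C₀ * jb w ^ N * Real.exp (Φt w)) :
    wf Φ (berg at_ Ψt Φt v) ∩ {z : Fin n → ℂ | Φ z - Φt z = 0} ⊆
      ((fun w => κ.symm w) '' wf Φ v) ∩ {z : Fin n → ℂ | Φ z - Φt z = 0} := by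
  rintro z₀ ⟨⟨hz0, hnot⟩, hz0r⟩
  refine ⟨⟨κ z₀, ⟨by simpa using hz0, ?_⟩, by simp⟩, hz0r⟩
  rintro ⟨V, hVo, hVc, hV0, hV, C, c1, hC, hc1, hVb⟩
  apply hnot
  have hκr : Φ (κ z₀) - Φt (κ z₀) = 0 := by
    have : κ z₀ ∈ {z : Fin n → ℂ | Φ z - Φt z = 0} := by
      rw [← hrad]; exact ⟨z₀, hz0r, rfl⟩
    exact this
  have hκc : Continuous κ := (LinearMap.continuous_of_finiteDimensional κ.toLinearMap)
  set V' : Set (Fin n → ℂ) := V ∩ {w | Φ w - Φt w < c1 / 2 * eSq w} with hV'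
  have hV'o : IsOpen V' := hVo.inter (isOpen_lt
    ((x_quad_cont hΦ.1).sub (x_quad_cont hΦt.1)) (continuous_const.mul x_eSq_cont))
  have hV'c : IsConic V' := by
    rintro w ⟨h1, h2⟩ t ht
    refine ⟨hVc w h1 t ht, ?_⟩
    simp only [Set.mem_ofPred_eq] at h2 ⊢
    rw [x_quad_smul hΦ.1, x_quad_smul hΦt.1, x_eSq_smul]
    have := mul_lt_mul_of_pos_left h2 (pow_pos ht 2)
    linarith
  have hV'm : κ z₀ ∈ V' := by
    refine ⟨hV, ?_⟩
    simp only [Set.mem_ofPred_eq]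
    rw [hκr]
    have := x_eSq_pos (z := κ z₀) (by simpa using hz0)
    positivity
  obtain ⟨U, δ, hUo, hUc, hU0, hUm, hδ, hU⟩ := x_cone (κ ⁻¹' V') (hV'o.preimage hκc)
    (by
      intro z hz t ht
      have := hV'c _ hz t ht
      simpa using this) z₀ hz0 hV'm
  obtain ⟨m, hm, hgeom⟩ := x_geom κ c (c1 / 2) δ hc (by positivity) hδ
  obtain ⟨A, hA, hjb⟩ := x_jb (n := n) N (m / 2) (by positivity)
  set I : ℝ := ∫ w : Fin n → ℂ, Real.exp (-(m / 2) * eSq w) with hI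
  have hI0 : 0 ≤ I := integral_nonneg fun w => (Real.exp_pos _).le
  set D : ℝ := C + C₀ * A with hD
  have hDp : 0 < D := by positivity
  refine ⟨U, hUo, hUc, hU0, hUm, ‖at_‖ * (D * I) + 1, m, by positivity, hm, fun z hz => ?_⟩
  have key : ∀ w : Fin n → ℂ,
      ‖Complex.exp (2 * Ψt z (star w)) * v w * (Real.exp (-2 * Φt w) : ℂ)‖ ≤
        (D * Real.exp (Φ z - m * eSq z)) * Real.exp (-(m / 2) * eSq w) := by
    intro w
    have hs := x_eSq_nonneg w
    have hre : (2 * Ψt z (star w)).re = 2 * (Ψt z (star w)).re := by simp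
    rw [norm_mul, norm_mul, Complex.norm_exp, hre, Complex.norm_real,
      Real.norm_of_nonneg (Real.exp_pos _).le]
    have he := hest z w
    have hbig : ∀ T E : ℝ, 0 < T → T ≤ D → ‖v w‖ ≤ T * Real.exp (Φt w + E) →
        E + m / 2 * eSq w + m * eSq z ≤ c * eSq (z - κ.symm w) →
        Real.exp (2 * (Ψt z (star w)).re) * ‖v w‖ * Real.exp (-2 * Φt w) ≤
        (D * Real.exp (Φ z - m * eSq z)) * Real.exp (-(m / 2) * eSq w) := by
      intro T E hT hTD hvT hE
      calc Real.exp (2 * (Ψt z (star w)).re) * ‖v w‖ * Real.exp (-2 * Φt w)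
          ≤ Real.exp (2 * (Ψt z (star w)).re) * (T * Real.exp (Φt w + E))
            * Real.exp (-2 * Φt w) := by gcongr
        _ = T * Real.exp (2 * (Ψt z (star w)).re + (Φt w + E) + -2 * Φt w) := by
          rw [Real.exp_add _ (-2 * Φt w), Real.exp_add (2 * (Ψt z (star w)).re)]; ring
        _ ≤ D * Real.exp ((Φ z - m * eSq z) + -(m / 2) * eSq w) := by
          gcongr ?_ * Real.exp ?_
          linarith
        _ = _ := by rw [Real.exp_add]; ring
    by_cases hw : w ∈ V'
    · have hv1 := hVb w hw.1
      have hv2 : Φ w - Φt w < c1 / 2 * eSq w := hw.2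
      refine hbig C (-(c1 / 2) * eSq w) hC (by rw [hD]; linarith [mul_pos hC₀ hA]) (hv1.trans ?_) ?_
      · gcongr
        linarith
      · have := (hgeom z w).2
        nlinarith
    · have h1 := (hgeom z w).1 (hU z hz (κ.symm w) (by simpa using hw))
      refine hbig (C₀ * A) (m / 2 * eSq w) (by positivity) (by rw [hD]; linarith) ?_ (by linarith)
      calc ‖v w‖ ≤ C₀ * jb w ^ N * Real.exp (Φt w) := hg w
        _ ≤ C₀ * (A * Real.exp (m / 2 * eSq w)) * Real.exp (Φt w) := by gcongr; exact hjb w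
        _ = _ := by rw [Real.exp_add]; ring
  have hint := norm_integral_le_of_norm_le
    ((x_gauss (n := n) (b := m / 2) (by positivity)).const_mul (D * Real.exp (Φ z - m * eSq z)))
    (Filter.Eventually.of_forall key)
  rw [integral_const_mul, ← hI] at hint
  unfold berg
  rw [norm_mul]
  calc _ ≤ ‖at_‖ * (D * Real.exp (Φ z - m * eSq z) * I) := by gcongr
    _ = ‖at_‖ * (D * I) * Real.exp (Φ z - m * eSq z) := by ring
    _ ≤ _ := by gcongr; linarith
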